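/- There is a constant C such that for every h ∈ C₀^∞(ℝ⁴) and every R > 0, R ‖h‖_{L^∞({x : R/2 < |x| < R})} ≤ C Σ_{|μ|≤2} ‖∇_x Ω^μ h‖_{L²(ℝ⁴)}. -/

import Mathlib

/-!
Let `x = r e` with `‖e‖ = 1`. For `‖w‖ ≤ 1/2` project the segment `t ↦ e + t w`, `0 ≤ t ≤ 1`, to the
sphere of radius `r`. The resulting arc moves by rotations in the plane of `e` and `w`, whose
generator is a combination of the `Ω_{jk}` with bounded coefficients, so the one-dimensional
identity `g(0) = ∫₀¹ t ((1 - t)² g)'' dt` bounds `|h(x)|` by the integrals of `t |Ω^μ h|`,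
`|μ| ≤ 2`, along each arc.

Now average over `w`. For fixed `t`, the radial bound
`a² |F(a p)|² ≤ ½ ‖p‖² ∫₀^∞ σ³ |∇F(σ p)|² dσ` (Cauchy–Schwarz against `σ⁻³`) and the substitution
`y = σ (e + t w)` show that the `L²` average of `r F` over the points at time `t` of the arcs is at
most a multiple of `t^{-3/2} ‖∇F‖₂`: the Jacobian contributes `t⁻⁴`, while each `y` is hit only for
`σ` in a window of logarithmic length `O(t)`. The weight `t` compensates this concentration at `x`,
since `∫₀¹ t · t^{-3/2} dt < ∞`.
-/

open MeasureTheory Real Set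
open scoped ENNReal FourierTransform

noncomputable section

/-- Euclidean space ℝⁿ. -/
abbrev Eu (n : ℕ) : Type := EuclideanSpace ℝ (Fin n)

/-- Spatial partial derivative ∂_i of a function on ℝⁿ. -/
def sd {n : ℕ} (i : Fin n) (h : Eu n → ℝ) : Eu n → ℝ :=
  fun x => fderiv ℝ h x (EuclideanSpace.single i 1)

/-- Iterated spatial derivatives ∂_x^μ. -/
def sdIter {n : ℕ} : {m : ℕ} → (Fin m → Fin n) → (Eu n → ℝ) → Eu n → ℝ
  | 0, _, h => h
  | m + 1, μ, h => sd (μ 0) (sdIter (fun i : Fin m => μ i.succ) h)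

/-- Time derivative ∂_t of u(t,x). -/
def td {n : ℕ} (u : ℝ → Eu n → ℝ) : ℝ → Eu n → ℝ :=
  fun t x => deriv (fun s => u s x) t

/-- Space-time partial derivative ∂_α, with ∂₀ = ∂_t. -/
def pd {n : ℕ} (α : Fin (n + 1)) (u : ℝ → Eu n → ℝ) : ℝ → Eu n → ℝ :=
  if h : α = 0 then td u else fun t x => sd (α.pred h) (u t) x

/-- Iterated space-time derivatives ∂^μ. -/
def pdIter {n : ℕ} : {m : ℕ} → (Fin m → Fin (n + 1)) → (ℝ → Eu n → ℝ) → ℝ → Eu n → ℝ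
  | 0, _, u => u
  | m + 1, μ, u => pd (μ 0) (pdIter (fun i : Fin m => μ i.succ) u)

/-- Iterated spatial derivatives of a space-time function. -/
def sdIterT {n m : ℕ} (μ : Fin m → Fin n) (u : ℝ → Eu n → ℝ) : ℝ → Eu n → ℝ :=
  fun t x => sdIter μ (u t) x

/-- The d'Alembertian □ = ∂_t² − Δ. -/
def dAlembert {n : ℕ} (u : ℝ → Eu n → ℝ) : ℝ → Eu n → ℝ :=
  fun t x => td (td u) t x - ∑ i : Fin n, sd i (sd i (u t)) x

/-- |u'| : the magnitude of the space-time gradient (∂_t u, ∇_x u). -/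
def gradMag {n : ℕ} (u : ℝ → Eu n → ℝ) : ℝ → Eu n → ℝ :=
  fun t x => Real.sqrt (∑ α : Fin (n + 1), pd α u t x ^ 2)

/-- Smoothness of a space-time function. -/
def SmoothTX {n : ℕ} (u : ℝ → Eu n → ℝ) : Prop :=
  ContDiff ℝ (⊤ : ℕ∞) fun p : ℝ × Eu n => u p.1 p.2

/-- L² norm over a region S ⊆ ℝⁿ. -/
def L2x {n : ℕ} (S : Set (Eu n)) (f : Eu n → ℝ) : ℝ≥0∞ :=
  eLpNorm f 2 (volume.restrict S)

/-- Space-time L² norm over [0,T] × S. -/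
def L2st {n : ℕ} (T : ℝ) (S : Set (Eu n)) (u : ℝ → Eu n → ℝ) : ℝ≥0∞ :=
  eLpNorm (fun p : ℝ × Eu n => u p.1 p.2) 2
    ((volume.restrict (Icc 0 T)).prod (volume.restrict S))

/-- Japanese bracket ⟨x⟩ = (1+|x|²)^{1/2}. -/
def jap {n : ℕ} (x : Eu n) : ℝ := Real.sqrt (1 + ‖x‖ ^ 2)

/-- Homogeneous Sobolev norm ‖f‖_{Ḣ^s} = ‖ |ξ|^s 𝓕f(ξ) ‖_{L²}. -/
def sobolevHom {n : ℕ} (s : ℝ) (f : Eu n → ℝ) : ℝ≥0∞ :=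
  eLpNorm (fun ξ : Eu n => ‖ξ‖ ^ s * ‖𝓕 (fun x : Eu n => (f x : ℂ)) ξ‖) 2 volume

/-- A smooth compact obstacle K = {ρ ≤ 0} given by a smooth defining function. -/
structure SmoothObstacle (n : ℕ) where
  ρ : Eu n → ℝ
  smooth : ContDiff ℝ (⊤ : ℕ∞) ρ
  K : Set (Eu n)
  K_def : K = {x | ρ x ≤ 0}
  compact : IsCompact K
  grad_ne : ∀ x, ρ x = 0 → fderiv ℝ ρ x ≠ 0

/-- Ordered pairs (j,k), j < k, indexing the rotation fields Ω_{jk} on ℝ⁴. -/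
abbrev OP : Type := {p : Fin 4 × Fin 4 // p.1 < p.2}

/-- Rotation vector field Ω_{jk} = x_j ∂_k − x_k ∂_j. -/
def rot (j k : Fin 4) (h : Eu 4 → ℝ) : Eu 4 → ℝ :=
  fun x => x j * sd k h x - x k * sd j h x

/-- Products Ω^μ of rotation vector fields. -/
def rotIter : {m : ℕ} → (Fin m → OP) → (Eu 4 → ℝ) → Eu 4 → ℝ
  | 0, _, h => h
  | m + 1, μ, h => rot (μ 0).1.1 (μ 0).1.2 (rotIter (fun i : Fin m => μ i.succ) h)

/-- Radial derivative ∇_r = (x/|x|)·∇. -/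
def radialD (h : Eu 4 → ℝ) : Eu 4 → ℝ :=
  fun x => fderiv ℝ h x (‖x‖⁻¹ • x)

/-- Iterated radial derivatives ∇_r^j. -/
def radialIter : ℕ → (Eu 4 → ℝ) → Eu 4 → ℝ
  | 0, h => h
  | j + 1, h => radialD (radialIter j h)

/-- Magnitude of the spatial gradient ∇_x h. -/
def spGradMag (h : Eu 4 → ℝ) : Eu 4 → ℝ :=
  fun x => Real.sqrt (∑ i : Fin 4, sd i h x ^ 2)

/-- Index set for the fields Z = {∂_α, Ω_{jk}}. -/
abbrev ZIdx : Type := Fin 5 ⊕ OP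

/-- Action of a single field Z. -/
def applyZ : ZIdx → (ℝ → Eu 4 → ℝ) → ℝ → Eu 4 → ℝ
  | Sum.inl α, u => pd (n := 4) α u
  | Sum.inr p, u => fun t x => rot p.1.1 p.1.2 (u t) x

/-- Products Z^μ of the fields Z. -/
def ZIter : {m : ℕ} → (Fin m → ZIdx) → (ℝ → Eu 4 → ℝ) → ℝ → Eu 4 → ℝ
  | 0, _, u => u
  | m + 1, μ, u => applyZ (μ 0) (ZIter (fun i : Fin m => μ i.succ) u)

/-- The perturbed d'Alembertian □_h φ = □φ + h^{αβ} ∂_α ∂_β φ. -/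
def boxH (h : Fin 5 → Fin 5 → ℝ → Eu 4 → ℝ) (φ : ℝ → Eu 4 → ℝ) : ℝ → Eu 4 → ℝ :=
  fun t x => dAlembert φ t x
    + ∑ α : Fin 5, ∑ β : Fin 5, h α β t x * pd (n := 4) α (pd (n := 4) β φ) t x

/-- |h| = Σ_{α,β} |h^{αβ}|. -/
def habs (h : Fin 5 → Fin 5 → ℝ → Eu 4 → ℝ) : ℝ → Eu 4 → ℝ :=
  fun t x => ∑ α : Fin 5, ∑ β : Fin 5, |h α β t x|

/-- |∂h| = Σ_{α,β,γ} |∂_γ h^{αβ}|. -/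
def dhabs (h : Fin 5 → Fin 5 → ℝ → Eu 4 → ℝ) : ℝ → Eu 4 → ℝ :=
  fun t x => ∑ γ : Fin 5, ∑ α : Fin 5, ∑ β : Fin 5, |pd (n := 4) γ (h α β) t x|

/-- Mixed norm ‖G‖_{L¹_t L¹_r L²_ω(ℝ₊×ℝ⁴)}. -/
def mixedNorm (G : ℝ → Eu 4 → ℝ) : ℝ≥0∞ :=
  ∫⁻ t in Ioi (0 : ℝ), ∫⁻ r in Ioi (0 : ℝ),
    eLpNorm (fun ω : Metric.sphere (0 : Eu 4) 1 => G t (r • (ω : Eu 4))) 2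
        (volume : Measure (Eu 4)).toSphere
      * ENNReal.ofReal (r ^ 3)

/-- The quantity M(T) (for `kmax = 50`) and A(T) (for `kmax = 49`) from the iteration. -/
def Mgen (kmax : ℕ) (Kc : Set (Eu 4)) (δ : ℝ) (u : ℝ → Eu 4 → ℝ) (T : ℝ) : ℝ≥0∞ :=
  (∑ m ∈ Finset.range (kmax + 1), ∑ μ : Fin m → Fin 5,
      ((⨆ t ∈ Icc (0 : ℝ) T, L2x Kc fun x => gradMag (pdIter (n := 4) μ u) t x)
        + L2st T Kc fun t x => jap x ^ (-(1/2 : ℝ) - δ) * gradMag (pdIter (n := 4) μ u) t x))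
  + (∑ m ∈ Finset.range kmax, ∑ μ : Fin m → ZIdx,
      ((L2st T Kc fun t x => jap x ^ (-(1/2 : ℝ) - δ) * gradMag (ZIter μ u) t x)
        + (L2st T (Kc ∩ {x : Eu 4 | 2 < ‖x‖}) fun t x =>
            jap x ^ (-(1/2 : ℝ) - 2*δ) * ZIter μ u t x)
        + ⨆ t ∈ Icc (0 : ℝ) T, L2x Kc fun x => gradMag (ZIter μ u) t x))
  + L2st T (Kc ∩ {x : Eu 4 | ‖x‖ < 3}) u

/-- The data (f,g) satisfy the compatibility conditions to infinite order for the
Dirichlet problem □u = Q(u) on the exterior of {ρ ≤ 0}: there is a smooth function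
attaining the data, vanishing on the boundary, and solving the equation
to infinite order at t = 0 (its Taylor coefficients at t = 0 are the formal ψ_k). -/
def CompatInfty {n : ℕ} (ρ : Eu n → ℝ) (f g : Eu n → ℝ)
    (Q : (ℝ → Eu n → ℝ) → ℝ → Eu n → ℝ) : Prop :=
  ∃ U : ℝ → Eu n → ℝ, SmoothTX U ∧ (∀ x, U 0 x = f x) ∧ (∀ x, td U 0 x = g x) ∧
    (∀ t x, ρ x = 0 → U t x = 0) ∧
    ∀ k : ℕ, ∀ x, 0 ≤ ρ x → td^[k] (fun s y => dAlembert U s y - Q U s y) 0 x = 0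

/-- The general quasilinear nonlinearity Q(u,u',u'') = A(u,u') + B^{αβ}(u,u') ∂_α∂_β u. -/
def Qnl {n : ℕ} (A : ℝ × (Fin (n + 1) → ℝ) → ℝ)
    (B : Fin (n + 1) → Fin (n + 1) → ℝ × (Fin (n + 1) → ℝ) → ℝ)
    (u : ℝ → Eu n → ℝ) : ℝ → Eu n → ℝ :=
  fun t x => A (u t x, fun α => pd α u t x)
    + ∑ α, ∑ β, B α β (u t x, fun γ => pd γ u t x) * pd α (pd β u) t x

/-- The quadratically truncated nonlinearity, evaluated on the pair (v,w);
the iteration RHS is `iterRHS a b A B u_{l-1} u_l`. -/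
def iterRHS (a : Fin 5 → ℝ) (b A : Fin 5 → Fin 5 → ℝ) (B : Fin 5 → Fin 5 → Fin 5 → ℝ)
    (v w : ℝ → Eu 4 → ℝ) : ℝ → Eu 4 → ℝ :=
  fun t x => (∑ α : Fin 5, a α * v t x * pd (n := 4) α v t x)
    + (∑ α : Fin 5, ∑ β : Fin 5, b α β * pd (n := 4) α v t x * pd (n := 4) β v t x)
    + (∑ α : Fin 5, ∑ β : Fin 5, A α β * v t x * pd (n := 4) α (pd (n := 4) β w) t x)
    + (∑ α : Fin 5, ∑ β : Fin 5, ∑ γ : Fin 5,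
        B α β γ * pd (n := 4) α v t x * pd (n := 4) β (pd (n := 4) γ w) t x)

section WeightedCauchySchwarz

lemma sq_lintegral_le_lintegral_inv_mul_lintegral {α : Type*} [MeasurableSpace α] {μ : Measure α}
    {w f : α → ℝ≥0∞} (hw : AEMeasurable w μ) (hf : AEMeasurable f μ) (hw0 : ∀ᵐ a ∂μ, w a ≠ 0)
    (hw_top : ∀ᵐ a ∂μ, w a ≠ ⊤) :
    (∫⁻ a, f a ∂μ) ^ 2 ≤ (∫⁻ a, (w a)⁻¹ ∂μ) * ∫⁻ a, w a * f a ^ 2 ∂μ := by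
  have sqrt_mul_sqrt : ∀ᵐ a ∂μ,
      f a = (w a)⁻¹ ^ (2⁻¹ : ℝ) * (w a * f a ^ 2) ^ (2⁻¹ : ℝ) := by
    filter_upwards [hw0, hw_top] with a h0 h_top
    rw [← ENNReal.mul_rpow_of_nonneg _ _ (by positivity), ← mul_assoc,
      ENNReal.inv_mul_cancel h0 h_top, one_mul]
    exact_mod_cast (ENNReal.pow_rpow_inv_natCast two_ne_zero (f a)).symm
  have sqrt_sq (z : ℝ≥0∞) : (z ^ (2⁻¹ : ℝ)) ^ 2 = z :=
    mod_cast ENNReal.rpow_inv_natCast_pow two_ne_zero z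
  have holder := ENNReal.lintegral_mul_norm_pow_le hw.inv (hw.mul (hf.pow_const 2))
    (p := 2⁻¹) (q := 2⁻¹) (by positivity) (by positivity) (by norm_num)
  calc (∫⁻ a, f a ∂μ) ^ 2
      = (∫⁻ a, (w a)⁻¹ ^ (2⁻¹ : ℝ) * (w a * f a ^ 2) ^ (2⁻¹ : ℝ) ∂μ) ^ 2 := by
        rw [lintegral_congr_ae sqrt_mul_sqrt]
    _ ≤ ((∫⁻ a, (w a)⁻¹ ∂μ) ^ (2⁻¹ : ℝ) * (∫⁻ a, w a * f a ^ 2 ∂μ) ^ (2⁻¹ : ℝ)) ^ 2 := by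
        gcongr; exact holder
    _ = (∫⁻ a, (w a)⁻¹ ∂μ) * ∫⁻ a, w a * f a ^ 2 ∂μ := by
        rw [mul_pow, sqrt_sq, sqrt_sq]

end WeightedCauchySchwarz

section RadialEstimate

variable {V : Type*} [NormedAddCommGroup V] [NormedSpace ℝ V]

lemma lintegral_Ioi_inv_pow {a : ℝ} (ha : 0 < a) {k : ℕ} (hk : k ≠ 0) :
    ∫⁻ s in Ioi a, (ENNReal.ofReal (s ^ (k + 1)))⁻¹ = ENNReal.ofReal (k * a ^ k)⁻¹ := by
  have hk' : (-(k + 1 : ℕ) : ℝ) < -1 := by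
    have : (0 : ℝ) < k := by positivity
    push_cast
    linarith
  calc ∫⁻ s in Ioi a, (ENNReal.ofReal (s ^ (k + 1)))⁻¹
      = ∫⁻ s in Ioi a, ENNReal.ofReal (s ^ (-(k + 1 : ℕ) : ℝ)) := by
        refine setLIntegral_congr_fun measurableSet_Ioi fun s hs => ?_
        have hs0 : 0 < s := ha.trans hs
        rw [← ENNReal.ofReal_inv_of_pos (by positivity), Real.rpow_neg hs0.le, Real.rpow_natCast]
    _ = ENNReal.ofReal (∫ s in Ioi a, s ^ (-(k + 1 : ℕ) : ℝ)) :=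
        (ofReal_integral_eq_lintegral_ofReal (integrableOn_Ioi_rpow_of_lt hk' ha)
          (ae_restrict_of_forall_mem measurableSet_Ioi fun s hs =>
            Real.rpow_nonneg (ha.trans hs).le _)).symm
    _ = ENNReal.ofReal (k * a ^ k)⁻¹ := by
        have hexp : (-(k + 1 : ℕ) + 1 : ℝ) = -(k : ℝ) := by
          push_cast
          ring
        rw [integral_Ioi_rpow_of_lt hk' ha, hexp, Real.rpow_neg ha.le, Real.rpow_natCast,
          neg_div_neg_eq, mul_inv_rev, div_eq_mul_inv]

lemma enorm_le_lintegral_Ioi_deriv [CompleteSpace V] {f : ℝ → V} (hf : ContDiff ℝ 1 f)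
    (hfc : HasCompactSupport f) (a : ℝ) : ‖f a‖ₑ ≤ ∫⁻ s in Ioi a, ‖deriv f s‖ₑ := by
  rw [← enorm_neg, ← hfc.integral_Ioi_deriv_eq hf a]
  exact enorm_integral_le_lintegral_enorm _

lemma pow_mul_sq_enorm_le_lintegral_Ioi_deriv [CompleteSpace V] {f : ℝ → V} (hf : ContDiff ℝ 1 f)
    (hfc : HasCompactSupport f) {a : ℝ} (ha : 0 < a) {k : ℕ} (hk : k ≠ 0) :
    ENNReal.ofReal (a ^ k) * ‖f a‖ₑ ^ 2 ≤
      ENNReal.ofReal (k : ℝ)⁻¹ *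
        ∫⁻ s in Ioi a, ENNReal.ofReal (s ^ (k + 1)) * ‖deriv f s‖ₑ ^ 2 := by
  have hderiv : Continuous (deriv f) := hf.continuous_deriv le_rfl
  have cauchy_schwarz := sq_lintegral_le_lintegral_inv_mul_lintegral
    (μ := volume.restrict (Ioi a)) (w := fun s => ENNReal.ofReal (s ^ (k + 1)))
    (f := fun s => ‖deriv f s‖ₑ) (by fun_prop) hderiv.enorm.measurable.aemeasurable
    (ae_restrict_of_forall_mem measurableSet_Ioi fun s hs =>
      (ENNReal.ofReal_pos.2 (pow_pos (ha.trans hs) _)).ne')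
    (.of_forall fun _ => ENNReal.ofReal_ne_top)
  rw [lintegral_Ioi_inv_pow ha hk] at cauchy_schwarz
  calc ENNReal.ofReal (a ^ k) * ‖f a‖ₑ ^ 2
      ≤ ENNReal.ofReal (a ^ k) * (ENNReal.ofReal (k * a ^ k)⁻¹ *
          ∫⁻ s in Ioi a, ENNReal.ofReal (s ^ (k + 1)) * ‖deriv f s‖ₑ ^ 2) := by
        gcongr
        exact (pow_le_pow_left' (enorm_le_lintegral_Ioi_deriv hf hfc a) 2).trans cauchy_schwarz
    _ = _ := by
        rw [← mul_assoc, ← ENNReal.ofReal_mul (by positivity)]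
        congr 2
        field_simp

variable {E : Type*} [NormedAddCommGroup E] [NormedSpace ℝ E]

/-- The weighted integral `∫₀^∞ σᵏ G(σ p) dσ` along the ray through `p`. With `k + 1` the dimension
of `E`, the weight is that of polar coordinates. -/
def rayIntegral (k : ℕ) (G : E → ℝ≥0∞) (p : E) : ℝ≥0∞ :=
  ∫⁻ σ in Ioi (0 : ℝ), ENNReal.ofReal (σ ^ k) * G (σ • p)

lemma pow_mul_sq_enorm_le_rayIntegral [CompleteSpace V] {F : E → V} (hF : ContDiff ℝ 1 F)
    (hFc : HasCompactSupport F) {a : ℝ} (ha : 0 < a) {p : E} (hp : p ≠ 0) {k : ℕ} (hk : k ≠ 0) :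
    ENNReal.ofReal (a ^ k) * ‖F (a • p)‖ₑ ^ 2 ≤
      ENNReal.ofReal (‖p‖ ^ 2 / k) * rayIntegral (k + 1) (fun y => ‖fderiv ℝ F y‖ₑ ^ 2) p := by
  have hderiv (s : ℝ) : deriv (fun s : ℝ => F (s • p)) s = fderiv ℝ F (s • p) p := by
    have hray : HasDerivAt (fun s : ℝ => s • p) p s := by
      simpa using (hasDerivAt_id s).smul_const p
    exact ((hF.differentiable one_ne_zero _).hasFDerivAt.comp_hasDerivAt s hray).deriv
  have hradial := pow_mul_sq_enorm_le_lintegral_Ioi_deriv (f := fun s : ℝ => F (s • p))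
    (hF.comp (contDiff_id.smul contDiff_const))
    (hFc.comp_isClosedEmbedding (isClosedEmbedding_smul_left hp)) ha hk
  calc ENNReal.ofReal (a ^ k) * ‖F (a • p)‖ₑ ^ 2
      ≤ ENNReal.ofReal (k : ℝ)⁻¹ * ∫⁻ s in Ioi a,
          ENNReal.ofReal (s ^ (k + 1)) * ‖deriv (fun s : ℝ => F (s • p)) s‖ₑ ^ 2 := hradial
    _ ≤ ENNReal.ofReal (k : ℝ)⁻¹ * ∫⁻ s in Ioi (0 : ℝ), ENNReal.ofReal (‖p‖ ^ 2) *
          (ENNReal.ofReal (s ^ (k + 1)) * ‖fderiv ℝ F (s • p)‖ₑ ^ 2) := by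
        refine mul_le_mul_right ((lintegral_mono fun s => ?_).trans
          (lintegral_mono_set (Ioi_subset_Ioi ha.le))) _
        rw [hderiv, mul_left_comm, ENNReal.ofReal_pow (norm_nonneg _), ofReal_norm,
          mul_comm (‖p‖ₑ ^ 2), ← mul_pow]
        gcongr
        exact ContinuousLinearMap.le_opENorm _ _
    _ = _ := by
        rw [lintegral_const_mul' _ _ ENNReal.ofReal_ne_top, ← mul_assoc,
          ← ENNReal.ofReal_mul (by positivity), inv_mul_eq_div, rayIntegral]

end RadialEstimate

section BallAverage

variable {E : Type*} [NormedAddCommGroup E] [NormedSpace ℝ E]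

-- The parameters lie between `‖y‖ / (1 + ρ)` and `‖y‖ / (1 - ρ)`.
lemma lintegral_inv_mem_ball_smul_le {e : E} (he : ‖e‖ = 1) {ρ : ℝ} (hρ : 0 < ρ)
    (hρ' : ρ ≤ 1 / 2) (y : E) :
    ∫⁻ σ in {σ : ℝ | y ∈ Metric.ball (σ • e) (σ * ρ)}, ENNReal.ofReal σ⁻¹ ≤
      ENNReal.ofReal (4 * ρ) := by
  set b := ‖y‖ / (1 + ρ)
  set d := ‖y‖ / (1 - ρ)
  have hsub : {σ : ℝ | y ∈ Metric.ball (σ • e) (σ * ρ)} ⊆ Ioo b d := fun σ hσ => by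
    have hdist : ‖y - σ • e‖ < σ * ρ := mem_ball_iff_norm.1 hσ
    have hσ0 : 0 < σ := pos_of_mul_pos_left ((norm_nonneg _).trans_lt hdist) hρ.le
    have hnorm : ‖σ • e‖ = σ := by rw [norm_smul, he, mul_one, Real.norm_of_nonneg hσ0.le]
    have hlower := norm_sub_norm_le y (σ • e)
    have hupper := norm_sub_norm_le (σ • e) y
    rw [norm_sub_rev] at hupper
    exact ⟨(div_lt_iff₀ (by linarith)).2 (by linarith), (lt_div_iff₀ (by linarith)).2 (by linarith)⟩
  refine (lintegral_mono_set hsub).trans ?_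
  rcases eq_or_ne y 0 with rfl | hy
  · simp [b, d]
  have hb : 0 < b := by positivity
  calc ∫⁻ σ in Ioo b d, ENNReal.ofReal σ⁻¹
      ≤ ∫⁻ _ in Ioo b d, ENNReal.ofReal b⁻¹ :=
        setLIntegral_mono' measurableSet_Ioo fun σ hσ => by gcongr; exact hσ.1.le
    _ = ENNReal.ofReal (b⁻¹ * (d - b)) := by
        rw [setLIntegral_const, Real.volume_Ioo, ENNReal.ofReal_mul (inv_nonneg.2 hb.le)]
    _ ≤ ENNReal.ofReal (4 * ρ) := by
        have hratio : b⁻¹ * (d - b) = 2 * ρ / (1 - ρ) := by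
          have h1 : 1 - ρ ≠ 0 := by linarith
          have h2 : ‖y‖ ≠ 0 := norm_ne_zero_iff.2 hy
          simp only [b, d]
          field_simp
          ring
        rw [hratio]
        refine ENNReal.ofReal_le_ofReal ((div_le_iff₀ (by linarith)).2 ?_)
        nlinarith

variable [FiniteDimensional ℝ E] [MeasurableSpace E] [BorelSpace E] {μ : Measure E}
  [μ.IsAddHaarMeasure]

lemma setLIntegral_ball_comp_affine (a c : E) {t : ℝ} (ht : 0 < t) (ρ : ℝ) (G : E → ℝ≥0∞) :
    ∫⁻ w in Metric.ball c ρ, G (a + t • w) ∂μ =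
      ENNReal.ofReal (t ^ Module.finrank ℝ E)⁻¹ *
        ∫⁻ y in Metric.ball (a + t • c) (t * ρ), G y ∂μ := by
  set φ : E ≃ₜ E := (Homeomorph.smulOfNeZero t ht.ne').trans (Homeomorph.addLeft a)
  have hmap : μ.map φ = ENNReal.ofReal (t ^ Module.finrank ℝ E)⁻¹ • μ := by
    have hcomp : ⇑φ = (a + ·) ∘ (t • ·) := rfl
    rw [hcomp, ← Measure.map_map (by fun_prop) (by fun_prop), Measure.map_addHaar_smul μ ht.ne',
      Measure.map_smul, map_add_left_eq_self, abs_of_pos (by positivity)]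
  have hball : φ ⁻¹' Metric.ball (a + t • c) (t * ρ) = Metric.ball c ρ := by
    ext w
    have hdist : dist (φ w) (a + t • c) = t * dist w c :=
      (dist_add_left _ _ _).trans ((dist_smul₀ _ _ _).trans (by
        rw [Units.val_mk0, Real.norm_of_nonneg ht.le]))
    rw [mem_preimage, Metric.mem_ball, Metric.mem_ball, hdist, mul_lt_mul_iff_right₀ ht]
  rw [← smul_eq_mul, ← lintegral_smul_measure, ← Measure.restrict_smul, ← hmap,
    φ.measurableEmbedding.restrict_map, φ.measurableEmbedding.lintegral_map, hball]
  rfl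

lemma setLIntegral_ball_pow_mul_comp_smul {k : ℕ} (hk : Module.finrank ℝ E = k + 1)
    (G : E → ℝ≥0∞) (e : E) {σ : ℝ} (hσ : 0 < σ) (ρ : ℝ) :
    ∫⁻ p in Metric.ball e ρ, ENNReal.ofReal (σ ^ k) * G (σ • p) ∂μ =
      ∫⁻ y in Metric.ball (σ • e) (σ * ρ), ENNReal.ofReal σ⁻¹ * G y ∂μ := by
  have hball := setLIntegral_ball_comp_affine (μ := μ) 0 e hσ ρ G
  simp only [zero_add] at hball
  rw [lintegral_const_mul' _ _ ENNReal.ofReal_ne_top,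
    lintegral_const_mul' _ _ ENNReal.ofReal_ne_top, hball, ← mul_assoc,
    ← ENNReal.ofReal_mul (by positivity), hk, pow_succ, mul_inv,
    mul_inv_cancel_left₀ (by positivity)]

lemma setLIntegral_ball_rayIntegral_le {k : ℕ} (hk : Module.finrank ℝ E = k + 1) {G : E → ℝ≥0∞}
    (hG : Measurable G) {e : E} (he : ‖e‖ = 1) {ρ : ℝ} (hρ : 0 < ρ) (hρ' : ρ ≤ 1 / 2) :
    ∫⁻ p in Metric.ball e ρ, rayIntegral k G p ∂μ ≤ ENNReal.ofReal (4 * ρ) * ∫⁻ y, G y ∂μ := by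
  set S : Set (ℝ × E) := {q | q.2 ∈ Metric.ball (q.1 • e) (q.1 * ρ)}
  set f : ℝ → E → ℝ≥0∞ := fun σ y => S.indicator (fun q => ENNReal.ofReal q.1⁻¹ * G q.2) (σ, y)
  have hS : MeasurableSet S :=
    measurableSet_lt (f := fun q : ℝ × E => dist q.2 (q.1 • e)) (by fun_prop) (by fun_prop)
  have hf : Measurable (Function.uncurry f) := Measurable.indicator (by fun_prop) hS
  have hscale : ∀ σ ∈ Ioi (0 : ℝ),
      ∫⁻ p in Metric.ball e ρ, ENNReal.ofReal (σ ^ k) * G (σ • p) ∂μ = ∫⁻ y, f σ y ∂μ :=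
    fun σ hσ => (setLIntegral_ball_pow_mul_comp_smul hk G e hσ ρ).trans
      (lintegral_indicator measurableSet_ball _).symm
  have hslice (y : E) : ∫⁻ σ in Ioi (0 : ℝ), f σ y ≤ ENNReal.ofReal (4 * ρ) * G y :=
    calc ∫⁻ σ in Ioi (0 : ℝ), f σ y
        ≤ ∫⁻ σ, f σ y := lintegral_mono' Measure.restrict_le_self le_rfl
      _ = (∫⁻ σ in {σ : ℝ | y ∈ Metric.ball (σ • e) (σ * ρ)}, ENNReal.ofReal σ⁻¹) * G y :=
          (lintegral_indicator (hS.preimage measurable_prodMk_right) _).trans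
            (lintegral_mul_const (G y) (ENNReal.measurable_ofReal.comp measurable_inv))
      _ ≤ ENNReal.ofReal (4 * ρ) * G y := by
          gcongr
          exact lintegral_inv_mem_ball_smul_le he hρ hρ' y
  calc ∫⁻ p in Metric.ball e ρ, rayIntegral k G p ∂μ
      = ∫⁻ σ in Ioi (0 : ℝ), ∫⁻ p in Metric.ball e ρ, ENNReal.ofReal (σ ^ k) * G (σ • p) ∂μ :=
        lintegral_lintegral_swap (Measurable.aemeasurable (by unfold Function.uncurry; fun_prop))
    _ = ∫⁻ σ in Ioi (0 : ℝ), ∫⁻ y, f σ y ∂μ := setLIntegral_congr_fun measurableSet_Ioi hscale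
    _ = ∫⁻ y, (∫⁻ σ in Ioi (0 : ℝ), f σ y) ∂μ := lintegral_lintegral_swap hf.aemeasurable
    _ ≤ ENNReal.ofReal (4 * ρ) * ∫⁻ y, G y ∂μ := by
        rw [← lintegral_const_mul _ hG]
        exact lintegral_mono hslice

end BallAverage

section SecondOrder

variable {V : Type*} [NormedAddCommGroup V] [NormedSpace ℝ V] {g g' g'' : ℝ → V}

-- With `χ t = (1 - t) ^ 2`, the integrand is `t • (χ • g)''`; integrate by parts, using `χ 0 = 1`
-- and `χ 1 = χ' 1 = 0`.
lemma integral_smul_second_order_eq [CompleteSpace V]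
    (hg : ∀ t ∈ Icc (0 : ℝ) 1, HasDerivAt g (g' t) t)
    (hg' : ∀ t ∈ Icc (0 : ℝ) 1, HasDerivAt g' (g'' t) t) (hg'' : ContinuousOn g'' (Icc 0 1)) :
    ∫ t in (0 : ℝ)..1, t • ((2 : ℝ) • g t - (4 * (1 - t)) • g' t + (1 - t) ^ 2 • g'' t) = g 0 := by
  have hg_cont : ContinuousOn g (Icc 0 1) := fun t ht => (hg t ht).continuousAt.continuousWithinAt
  have hg'_cont : ContinuousOn g' (Icc 0 1) :=
    fun t ht => (hg' t ht).continuousAt.continuousWithinAt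
  have antiderivative : ∀ t ∈ Icc (0 : ℝ) 1, HasDerivAt
      (fun t => t • ((-2 * (1 - t)) • g t + (1 - t) ^ 2 • g' t) - (1 - t) ^ 2 • g t)
      (t • ((2 : ℝ) • g t - (4 * (1 - t)) • g' t + (1 - t) ^ 2 • g'' t)) t := fun t ht => by
    have hsub : HasDerivAt (fun s : ℝ => 1 - s) (-1) t := by
      simpa using (hasDerivAt_id t).const_sub 1
    refine (((hasDerivAt_id t).fun_smul (((hsub.const_mul (-2)).fun_smul (hg t ht)).fun_add
      ((hsub.fun_pow 2).fun_smul (hg' t ht)))).fun_sub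
        ((hsub.fun_pow 2).fun_smul (hg t ht))).congr_deriv ?_
    simp only [id, Nat.cast_ofNat]
    match_scalars <;> ring
  rw [intervalIntegral.integral_eq_sub_of_hasDerivAt
    (fun t ht => antiderivative t (by rwa [uIcc_of_le zero_le_one] at ht))
    (ContinuousOn.intervalIntegrable_of_Icc zero_le_one (by fun_prop))]
  simp

lemma enorm_apply_zero_le_lintegral_second_order [CompleteSpace V]
    (hg : ∀ t ∈ Icc (0 : ℝ) 1, HasDerivAt g (g' t) t)
    (hg' : ∀ t ∈ Icc (0 : ℝ) 1, HasDerivAt g' (g'' t) t) (hg'' : ContinuousOn g'' (Icc 0 1)) :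
    ‖g 0‖ₑ ≤
      ∫⁻ t in Ioc (0 : ℝ) 1, ENNReal.ofReal (t * (2 * ‖g t‖ + 4 * ‖g' t‖ + ‖g'' t‖)) := by
  rw [← integral_smul_second_order_eq hg hg' hg'', intervalIntegral.integral_of_le zero_le_one]
  refine (enorm_integral_le_lintegral_enorm _).trans
    (setLIntegral_mono' measurableSet_Ioc fun t ⟨ht0, ht1⟩ => ?_)
  rw [← ofReal_norm, norm_smul, Real.norm_of_nonneg ht0.le]
  refine ENNReal.ofReal_le_ofReal (mul_le_mul_of_nonneg_left ?_ ht0.le)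
  have hg'_coeff : ‖(4 * (1 - t)) • g' t‖ ≤ 4 * ‖g' t‖ := by
    rw [norm_smul, Real.norm_of_nonneg (by linarith)]
    gcongr
    linarith
  have hg''_coeff : ‖(1 - t) ^ 2 • g'' t‖ ≤ ‖g'' t‖ := by
    rw [norm_smul, Real.norm_of_nonneg (by positivity)]
    exact mul_le_of_le_one_left (norm_nonneg _) (pow_le_one₀ (by linarith) (by linarith))
  calc ‖(2 : ℝ) • g t - (4 * (1 - t)) • g' t + (1 - t) ^ 2 • g'' t‖
      ≤ ‖(2 : ℝ) • g t‖ + ‖(4 * (1 - t)) • g' t‖ + ‖(1 - t) ^ 2 • g'' t‖ :=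
        (norm_add_le _ _).trans (by gcongr; exact norm_sub_le _ _)
    _ ≤ 2 * ‖g t‖ + 4 * ‖g' t‖ + ‖g'' t‖ := by
        rw [norm_smul, Real.norm_two]
        gcongr

-- A change of the time variable: `g₁` and `g₂` are the derivatives of `g` in a time of speed `φ`.
lemma enorm_apply_zero_le_lintegral_of_speed [CompleteSpace V] {g₁ g₂ : ℝ → V} {φ φ' : ℝ → ℝ}
    {A B : ℝ} (hg : ∀ t ∈ Icc (0 : ℝ) 1, HasDerivAt g (φ t • g₁ t) t)
    (hg₁ : ∀ t ∈ Icc (0 : ℝ) 1, HasDerivAt g₁ (φ t • g₂ t) t) (hg₂ : ContinuousOn g₂ (Icc 0 1))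
    (hφ : ∀ t ∈ Icc (0 : ℝ) 1, HasDerivAt φ (φ' t) t) (hφ' : ContinuousOn φ' (Icc 0 1))
    (hφA : ∀ t ∈ Icc (0 : ℝ) 1, |φ t| ≤ A) (hφB : ∀ t ∈ Icc (0 : ℝ) 1, |φ' t| ≤ B) :
    ‖g 0‖ₑ ≤ ∫⁻ t in Ioc (0 : ℝ) 1,
      ENNReal.ofReal (t * (2 * ‖g t‖ + (4 * A + B) * ‖g₁ t‖ + A ^ 2 * ‖g₂ t‖)) := by
  have hφ_cont : ContinuousOn φ (Icc 0 1) := fun t ht => (hφ t ht).continuousAt.continuousWithinAt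
  have hg₁_cont : ContinuousOn g₁ (Icc 0 1) :=
    fun t ht => (hg₁ t ht).continuousAt.continuousWithinAt
  refine (enorm_apply_zero_le_lintegral_second_order hg
    (fun t ht => (hφ t ht).fun_smul (hg₁ t ht)) (by fun_prop)).trans
      (setLIntegral_mono' measurableSet_Ioc fun t ht => ENNReal.ofReal_le_ofReal
        (mul_le_mul_of_nonneg_left ?_ ht.1.le))
  have hφA := hφA t (Ioc_subset_Icc_self ht)
  have hA : 0 ≤ A := (abs_nonneg _).trans hφA
  calc 2 * ‖g t‖ + 4 * ‖φ t • g₁ t‖ + ‖φ t • φ t • g₂ t + φ' t • g₁ t‖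
      ≤ 2 * ‖g t‖ + 4 * (|φ t| * ‖g₁ t‖) + (|φ t| * (|φ t| * ‖g₂ t‖) + |φ' t| * ‖g₁ t‖) := by
        simp only [← Real.norm_eq_abs, ← norm_smul]
        gcongr
        exact norm_add_le _ _
    _ ≤ 2 * ‖g t‖ + 4 * (A * ‖g₁ t‖) + (A * (A * ‖g₂ t‖) + B * ‖g₁ t‖) := by
        gcongr
        exact hφB t (Ioc_subset_Icc_self ht)
    _ = 2 * ‖g t‖ + (4 * A + B) * ‖g₁ t‖ + A ^ 2 * ‖g₂ t‖ := by ring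

end SecondOrder

section Arc

variable {E V : Type*} [NormedAddCommGroup E] [NormedSpace ℝ E] [NormedAddCommGroup V]

/-- The central projection of the segment `t ↦ e + t • w` to the sphere of radius `r`: a curve
starting at `r • e` when `e` is a unit vector. -/
def arc (r : ℝ) (e w : E) (t : ℝ) : E := (r / ‖e + t • w‖) • (e + t • w)

/-- The angular speed of `arc r e w`, relative to the rotation `y ↦ ⟪e, y⟫ w - ⟪w, y⟫ e`. -/
def arcSpeed (e w : E) (t : ℝ) : ℝ := (‖e + t • w‖ ^ 2)⁻¹

/-- The integral of `t ‖F‖` along the first unit of time of `arc r e w`. The weight `t` comes from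
the one-dimensional estimate and tames the concentration of the arcs at `r • e` as `t → 0`. -/
def arcIntegral (F : E → V) (r : ℝ) (e w : E) : ℝ≥0∞ :=
  ∫⁻ t in Ioc (0 : ℝ) 1, ENNReal.ofReal t * ‖F (arc r e w t)‖ₑ

lemma norm_add_smul_mem_Icc {e w : E} (he : ‖e‖ = 1) (hw : ‖w‖ ≤ 1 / 2) {t : ℝ}
    (ht : t ∈ Icc (0 : ℝ) 1) : ‖e + t • w‖ ∈ Icc (1 / 2 : ℝ) (3 / 2) := by
  have htw : ‖t • w‖ ≤ 1 / 2 := by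
    rw [norm_smul, Real.norm_of_nonneg ht.1]
    exact (mul_le_of_le_one_left (norm_nonneg _) ht.2).trans hw
  have hlower := norm_sub_le (e + t • w) (t • w)
  rw [add_sub_cancel_right] at hlower
  exact ⟨by linarith, by linarith [norm_add_le e (t • w)]⟩

lemma add_smul_ne_zero {e w : E} (he : ‖e‖ = 1) (hw : ‖w‖ ≤ 1 / 2) {t : ℝ}
    (ht : t ∈ Icc (0 : ℝ) 1) : e + t • w ≠ 0 :=
  norm_pos_iff.1 (one_half_pos.trans_le (norm_add_smul_mem_Icc he hw ht).1)

lemma arc_zero (r : ℝ) {e : E} (he : ‖e‖ = 1) (w : E) : arc r e w 0 = r • e := by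
  simp [arc, he]

lemma hasDerivAt_add_smul (e w : E) (t : ℝ) : HasDerivAt (fun t : ℝ => e + t • w) w t := by
  simpa using ((hasDerivAt_id t).smul_const w).const_add e

lemma measurable_enorm_comp_arc [MeasurableSpace E] [BorelSpace E] [SecondCountableTopology E]
    {F : E → V} (hF : Continuous F) (r : ℝ) (e : E) :
    Measurable (Function.uncurry fun t w => ‖F (arc r e w t)‖ₑ) := by
  have harc : Measurable fun q : ℝ × E => arc r e q.2 q.1 := by
    unfold arc
    fun_prop
  exact hF.enorm.measurable.comp harc

lemma measurable_arcIntegral [MeasurableSpace E] [BorelSpace E] [SecondCountableTopology E]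
    {F : E → V} (hF : Continuous F) (r : ℝ) (e : E) : Measurable (arcIntegral F r e) :=
  ((ENNReal.measurable_ofReal.comp measurable_fst).mul
    (measurable_enorm_comp_arc hF r e)).lintegral_prod_left'

lemma setLIntegral_arcIntegral [MeasurableSpace E] [BorelSpace E] [SecondCountableTopology E]
    {F : E → V} (hF : Continuous F) (r : ℝ) (e : E) (μ : Measure E) [SFinite μ] (s : Set E) :
    ∫⁻ w in s, arcIntegral F r e w ∂μ =
      ∫⁻ t in Ioc (0 : ℝ) 1, ENNReal.ofReal t * ∫⁻ w in s, ‖F (arc r e w t)‖ₑ ∂μ := by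
  have hmeas := (measurable_enorm_comp_arc hF r e).comp measurable_swap
  simp only [arcIntegral, ← lintegral_const_mul' _ _ ENNReal.ofReal_ne_top]
  exact lintegral_lintegral_swap
    ((ENNReal.measurable_ofReal.comp measurable_snd).mul hmeas).aemeasurable

end Arc

section ArcRotation

variable {E V : Type*} [NormedAddCommGroup E] [InnerProductSpace ℝ E] [NormedAddCommGroup V]
  [NormedSpace ℝ V]

/-- The derivative along the infinitesimal rotation `y ↦ ⟪e, y⟫ w - ⟪w, y⟫ e` of the plane spanned
by `e` and `w`. -/
def rotDeriv (e w : E) (F : E → V) (y : E) : V :=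
  fderiv ℝ F y (inner ℝ e y • w - inner ℝ w y • e)

lemma hasDerivAt_arc (r : ℝ) (e w : E) {t : ℝ} (hp : e + t • w ≠ 0) :
    HasDerivAt (arc r e w) (arcSpeed e w t •
      (inner ℝ e (arc r e w t) • w - inner ℝ w (arc r e w t) • e)) t := by
  have hsegment := hasDerivAt_add_smul e w t
  have hN : ‖e + t • w‖ ≠ 0 := norm_ne_zero_iff.2 hp
  have hnorm : HasDerivAt (fun t : ℝ => ‖e + t • w‖)
      (inner ℝ w (e + t • w) / ‖e + t • w‖) t := by
    have hsqrt := hsegment.norm_sq.sqrt (by positivity)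
    simp only [Real.sqrt_sq (norm_nonneg _)] at hsqrt
    refine hsqrt.congr_deriv ?_
    rw [real_inner_comm]
    field_simp
  refine (((hasDerivAt_const t r).fun_div hnorm hN).fun_smul hsegment).congr_deriv ?_
  have hsq : inner ℝ e (e + t • w) = ‖e + t • w‖ ^ 2 - t * inner ℝ w (e + t • w) := by
    rw [← real_inner_self_eq_norm_sq, inner_add_left e (t • w), real_inner_smul_left]
    ring
  simp only [arc, arcSpeed, real_inner_smul_right, hsq]
  match_scalars <;> field_simp <;> ring

lemma hasDerivAt_comp_arc {F : E → V} (hF : Differentiable ℝ F) (r : ℝ) (e w : E) {t : ℝ}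
    (hp : e + t • w ≠ 0) :
    HasDerivAt (fun t => F (arc r e w t)) (arcSpeed e w t • rotDeriv e w F (arc r e w t)) t := by
  refine ((hF _).hasFDerivAt.comp_hasDerivAt t (hasDerivAt_arc r e w hp)).congr_deriv ?_
  rw [map_smul, rotDeriv]

lemma hasDerivAt_arcSpeed {e w : E} {t : ℝ} (hp : e + t • w ≠ 0) :
    HasDerivAt (arcSpeed e w) (-(2 * inner ℝ (e + t • w) w) * arcSpeed e w t ^ 2) t := by
  refine ((hasDerivAt_add_smul e w t).norm_sq.fun_inv
    (pow_ne_zero 2 (norm_ne_zero_iff.2 hp))).congr_deriv ?_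
  rw [arcSpeed, inv_pow, div_eq_mul_inv]

lemma arcSpeed_mem_Icc {e w : E} (he : ‖e‖ = 1) (hw : ‖w‖ ≤ 1 / 2) {t : ℝ}
    (ht : t ∈ Icc (0 : ℝ) 1) : arcSpeed e w t ∈ Icc (0 : ℝ) 4 := by
  have hnorm := (norm_add_smul_mem_Icc he hw ht).1
  refine ⟨inv_nonneg.2 (sq_nonneg _), inv_le_of_inv_le₀ (by norm_num) ?_⟩
  nlinarith

lemma abs_deriv_arcSpeed_le {e w : E} (he : ‖e‖ = 1) (hw : ‖w‖ ≤ 1 / 2) {t : ℝ}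
    (ht : t ∈ Icc (0 : ℝ) 1) : |-(2 * inner ℝ (e + t • w) w) * arcSpeed e w t ^ 2| ≤ 24 := by
  have hinner : |inner ℝ (e + t • w) w| ≤ 3 / 2 * (1 / 2) :=
    (abs_real_inner_le_norm _ _).trans
      (mul_le_mul (norm_add_smul_mem_Icc he hw ht).2 hw (norm_nonneg _) (by norm_num))
  have hspeed := arcSpeed_mem_Icc he hw ht
  calc |-(2 * inner ℝ (e + t • w) w) * arcSpeed e w t ^ 2|
      = 2 * |inner ℝ (e + t • w) w| * arcSpeed e w t ^ 2 := by
        rw [abs_mul, abs_neg, abs_mul, abs_two, abs_of_nonneg (sq_nonneg (arcSpeed e w t))]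
    _ ≤ 2 * (3 / 2 * (1 / 2)) * 4 ^ 2 := by
        gcongr
        exacts [hspeed.1, hspeed.2]
    _ = 24 := by norm_num

lemma contDiff_rotDeriv {F : E → V} {n : ℕ} (hF : ContDiff ℝ (n + 1) F) (e w : E) :
    ContDiff ℝ n (rotDeriv e w F) :=
  (hF.fderiv_right le_rfl).clm_apply
    (((contDiff_const.inner ℝ contDiff_id).smul contDiff_const).sub
      ((contDiff_const.inner ℝ contDiff_id).smul contDiff_const))

lemma enorm_le_lintegral_arc [CompleteSpace V] {F : E → V} (hF : ContDiff ℝ 2 F) (r : ℝ) {e w : E}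
    (he : ‖e‖ = 1) (hw : ‖w‖ ≤ 1 / 2) :
    ‖F (r • e)‖ₑ ≤ ∫⁻ t in Ioc (0 : ℝ) 1, ENNReal.ofReal
      (t * (40 * ∑ m ∈ Finset.range 3, ‖(rotDeriv e w)^[m] F (arc r e w t)‖)) := by
  have hXF : ContDiff ℝ 1 (rotDeriv e w F) := contDiff_rotDeriv (n := 1) hF e w
  have hXXF : Continuous (rotDeriv e w (rotDeriv e w F)) :=
    (contDiff_rotDeriv (n := 0) hXF e w).continuous
  have hp : ∀ t ∈ Icc (0 : ℝ) 1, e + t • w ≠ 0 := fun t ht => add_smul_ne_zero he hw ht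
  have arc_cont : ContinuousOn (arc r e w) (Icc 0 1) :=
    fun t ht => (hasDerivAt_arc r e w (hp t ht)).continuousAt.continuousWithinAt
  have speed_cont : ContinuousOn (arcSpeed e w) (Icc 0 1) :=
    fun t ht => (hasDerivAt_arcSpeed (hp t ht)).continuousAt.continuousWithinAt
  have along_arc := enorm_apply_zero_le_lintegral_of_speed
    (fun t ht => hasDerivAt_comp_arc (hF.differentiable two_ne_zero) r e w (hp t ht))
    (fun t ht => hasDerivAt_comp_arc (hXF.differentiable one_ne_zero) r e w (hp t ht))
    (hXXF.comp_continuousOn arc_cont) (fun t ht => hasDerivAt_arcSpeed (hp t ht)) (by fun_prop)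
    (fun t ht => (abs_of_nonneg (arcSpeed_mem_Icc he hw ht).1).trans_le
      (arcSpeed_mem_Icc he hw ht).2)
    (fun t ht => abs_deriv_arcSpeed_le he hw ht)
  rw [arc_zero r he w] at along_arc
  refine along_arc.trans (setLIntegral_mono' measurableSet_Ioc fun t ht =>
    ENNReal.ofReal_le_ofReal (mul_le_mul_of_nonneg_left ?_ ht.1.le))
  simp only [Finset.sum_range_succ, Finset.sum_range_zero, Function.iterate_succ_apply,
    Function.iterate_zero, id]
  linarith [norm_nonneg (F (arc r e w t)),
    norm_nonneg (rotDeriv e w (rotDeriv e w F) (arc r e w t))]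

end ArcRotation

section ArcAverage

variable {E V : Type*} [NormedAddCommGroup E] [InnerProductSpace ℝ E] [NormedAddCommGroup V]
  [NormedSpace ℝ V] [CompleteSpace V] {F : E → V} {r t : ℝ} {e w : E} {k : ℕ}

lemma pow_mul_sq_enorm_arc_le_rayIntegral (hF : ContDiff ℝ 1 F) (hFc : HasCompactSupport F)
    (hr : 0 < r) (he : ‖e‖ = 1) (hw : ‖w‖ ≤ 1 / 2) (ht : t ∈ Icc (0 : ℝ) 1) (hk : k ≠ 0) :
    ENNReal.ofReal (r ^ k) * ‖F (arc r e w t)‖ₑ ^ 2 ≤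
      ENNReal.ofReal ((3 / 2) ^ (k + 2) / k) *
        rayIntegral (k + 1) (fun y => ‖fderiv ℝ F y‖ₑ ^ 2) (e + t • w) := by
  have hp : e + t • w ≠ 0 := add_smul_ne_zero he hw ht
  have hN : 0 < ‖e + t • w‖ := norm_pos_iff.2 hp
  have radial := pow_mul_sq_enorm_le_rayIntegral hF hFc (div_pos hr hN) hp hk
  have hr_eq : r ^ k = ‖e + t • w‖ ^ k * (r / ‖e + t • w‖) ^ k := by
    rw [← mul_pow, mul_div_cancel₀ _ hN.ne']
  rw [hr_eq, ENNReal.ofReal_mul (by positivity), mul_assoc]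
  refine (mul_le_mul_right radial _).trans ?_
  rw [← mul_assoc, ← ENNReal.ofReal_mul (by positivity), ← mul_div_assoc, ← pow_add]
  gcongr
  exact (norm_add_smul_mem_Icc he hw ht).2

variable [FiniteDimensional ℝ E] [MeasurableSpace E] [BorelSpace E] (μ : Measure E)
  [μ.IsAddHaarMeasure]

lemma pow_mul_setLIntegral_ball_sq_enorm_arc_le (hdim : Module.finrank ℝ E = k + 2) (hk : k ≠ 0)
    (hF : ContDiff ℝ 1 F) (hFc : HasCompactSupport F) (hr : 0 < r) (he : ‖e‖ = 1)
    (ht : t ∈ Ioc (0 : ℝ) 1) :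
    ENNReal.ofReal (r ^ k) * ∫⁻ w in Metric.ball (0 : E) (1 / 2), ‖F (arc r e w t)‖ₑ ^ 2 ∂μ ≤
      ENNReal.ofReal (2 * (3 / 2) ^ (k + 2) / k * (t ^ (k + 1))⁻¹) *
        ∫⁻ y, ‖fderiv ℝ F y‖ₑ ^ 2 ∂μ := by
  have hgrad : Measurable fun y => ‖fderiv ℝ F y‖ₑ ^ 2 :=
    (hF.continuous_fderiv one_ne_zero).enorm.measurable.pow_const 2
  set G : E → ℝ≥0∞ := fun y => ‖fderiv ℝ F y‖ₑ ^ 2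
  have ht0 : 0 < t := ht.1
  have average := setLIntegral_ball_rayIntegral_le (μ := μ) (k := k + 1) hdim hgrad he
    (ρ := t * (1 / 2)) (by positivity) (by linarith [ht.2])
  calc ENNReal.ofReal (r ^ k) * ∫⁻ w in Metric.ball (0 : E) (1 / 2), ‖F (arc r e w t)‖ₑ ^ 2 ∂μ
      = ∫⁻ w in Metric.ball (0 : E) (1 / 2),
          ENNReal.ofReal (r ^ k) * ‖F (arc r e w t)‖ₑ ^ 2 ∂μ :=
        (lintegral_const_mul' _ _ ENNReal.ofReal_ne_top).symm
    _ ≤ ∫⁻ w in Metric.ball (0 : E) (1 / 2),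
          ENNReal.ofReal ((3 / 2) ^ (k + 2) / k) * rayIntegral (k + 1) G (e + t • w) ∂μ :=
        setLIntegral_mono' measurableSet_ball fun w hw =>
          pow_mul_sq_enorm_arc_le_rayIntegral hF hFc hr he (mem_ball_zero_iff.1 hw).le
            (Ioc_subset_Icc_self ht) hk
    _ = ENNReal.ofReal ((3 / 2) ^ (k + 2) / k) * (ENNReal.ofReal (t ^ (k + 2))⁻¹ *
          ∫⁻ p in Metric.ball e (t * (1 / 2)), rayIntegral (k + 1) G p ∂μ) := by
        rw [lintegral_const_mul' _ _ ENNReal.ofReal_ne_top,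
          setLIntegral_ball_comp_affine e 0 ht0, hdim, smul_zero, add_zero]
    _ ≤ ENNReal.ofReal ((3 / 2) ^ (k + 2) / k) * (ENNReal.ofReal (t ^ (k + 2))⁻¹ *
          (ENNReal.ofReal (4 * (t * (1 / 2))) * ∫⁻ y, G y ∂μ)) := by
        gcongr
    _ = ENNReal.ofReal (2 * (3 / 2) ^ (k + 2) / k * (t ^ (k + 1))⁻¹) * ∫⁻ y, G y ∂μ := by
        rw [← mul_assoc, ← mul_assoc, ← ENNReal.ofReal_mul (by positivity),
          ← ENNReal.ofReal_mul (by positivity)]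
        congr 2
        field_simp
        ring

lemma pow_mul_sq_setLIntegral_ball_enorm_arc_le (hdim : Module.finrank ℝ E = k + 2) (hk : k ≠ 0)
    (hF : ContDiff ℝ 1 F) (hFc : HasCompactSupport F) (hr : 0 < r) (he : ‖e‖ = 1)
    (ht : t ∈ Ioc (0 : ℝ) 1) :
    ENNReal.ofReal (r ^ k) * (∫⁻ w in Metric.ball (0 : E) (1 / 2), ‖F (arc r e w t)‖ₑ ∂μ) ^ 2 ≤
      μ (Metric.ball (0 : E) (1 / 2)) *
        ENNReal.ofReal (2 * (3 / 2) ^ (k + 2) / k * (t ^ (k + 1))⁻¹) *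
          eLpNorm (fderiv ℝ F) 2 μ ^ 2 := by
  set B := Metric.ball (0 : E) (1 / 2)
  have hmeas : Measurable fun w => ‖F (arc r e w t)‖ₑ :=
    (measurable_enorm_comp_arc hF.continuous r e).of_uncurry_left
  have cauchy_schwarz : (∫⁻ w in B, ‖F (arc r e w t)‖ₑ ∂μ) ^ 2 ≤
      μ B * ∫⁻ w in B, ‖F (arc r e w t)‖ₑ ^ 2 ∂μ := by
    simpa using sq_lintegral_le_lintegral_inv_mul_lintegral (μ := μ.restrict B) (w := 1)
      (f := fun w => ‖F (arc r e w t)‖ₑ) aemeasurable_const hmeas.aemeasurable (by simp) (by simp)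
  have hgrad : eLpNorm (fderiv ℝ F) 2 μ ^ 2 = ∫⁻ y, ‖fderiv ℝ F y‖ₑ ^ 2 ∂μ := by
    simpa using eLpNorm_nnreal_pow_eq_lintegral (f := fderiv ℝ F) (μ := μ)
      (two_ne_zero (α := NNReal))
  rw [hgrad, mul_assoc]
  refine (mul_le_mul_right cauchy_schwarz _).trans ?_
  rw [mul_left_comm]
  exact mul_le_mul_right
    (pow_mul_setLIntegral_ball_sq_enorm_arc_le μ hdim hk hF hFc hr he ht) _

lemma mul_setLIntegral_ball_enorm_arc_le (hdim : Module.finrank ℝ E = 4) (hF : ContDiff ℝ 1 F)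
    (hFc : HasCompactSupport F) (hr : 0 < r) (he : ‖e‖ = 1) (ht : t ∈ Ioc (0 : ℝ) 1) :
    ENNReal.ofReal r * ∫⁻ w in Metric.ball (0 : E) (1 / 2), ‖F (arc r e w t)‖ₑ ∂μ ≤
      ENNReal.ofReal (t ^ (-(3 / 2) : ℝ)) *
        ((μ (Metric.ball 0 (1 / 2)) * ENNReal.ofReal ((3 / 2) ^ 4)) ^ (2⁻¹ : ℝ) *
          eLpNorm (fderiv ℝ F) 2 μ) := by
  have squared := pow_mul_sq_setLIntegral_ball_enorm_arc_le μ (k := 2) hdim two_ne_zero hF hFc hr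
    he ht
  have htime : (t ^ 3)⁻¹ = (t ^ (-(3 / 2) : ℝ)) ^ 2 := by
    rw [← Real.rpow_mul_natCast ht.1.le, ← Real.rpow_natCast t 3, ← Real.rpow_neg ht.1.le]
    norm_num
  have hconst : 2 * (3 / 2) ^ (2 + 2) / (2 : ℕ) * (t ^ (2 + 1))⁻¹ =
      (3 / 2) ^ 4 * (t ^ (-(3 / 2) : ℝ)) ^ 2 := by
    rw [← htime]
    norm_num
  have sqrt_sq (z : ℝ≥0∞) : (z ^ (2⁻¹ : ℝ)) ^ 2 = z :=
    mod_cast ENNReal.rpow_inv_natCast_pow two_ne_zero z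
  rw [hconst, ENNReal.ofReal_mul (by positivity), ENNReal.ofReal_pow hr.le,
    ENNReal.ofReal_pow (Real.rpow_nonneg ht.1.le _), ← mul_pow] at squared
  refine (ENNReal.pow_le_pow_left_iff two_ne_zero).1 (squared.trans_eq ?_)
  rw [mul_pow, mul_pow, sqrt_sq]
  ring

lemma exists_setLIntegral_ball_arcIntegral_le_eLpNorm_fderiv (hdim : Module.finrank ℝ E = 4) :
    ∃ K : ℝ≥0∞, K ≠ ⊤ ∧ ∀ F : E → V, ContDiff ℝ 1 F → HasCompactSupport F →
      ∀ r : ℝ, 0 < r → ∀ e : E, ‖e‖ = 1 →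
        ENNReal.ofReal r * ∫⁻ w in Metric.ball (0 : E) (1 / 2), arcIntegral F r e w ∂μ ≤
          K * eLpNorm (fderiv ℝ F) 2 μ := by
  set B := Metric.ball (0 : E) (1 / 2)
  set A := (μ B * ENNReal.ofReal ((3 / 2) ^ 4)) ^ (2⁻¹ : ℝ)
  set T := ∫⁻ t in Ioc (0 : ℝ) 1, ENNReal.ofReal (t ^ (-(1 / 2) : ℝ))
  have hA : A ≠ ⊤ := ENNReal.rpow_ne_top_of_nonneg (by positivity)
    (ENNReal.mul_ne_top measure_ball_lt_top.ne ENNReal.ofReal_ne_top)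
  have hT : T ≠ ⊤ := by
    have hintegrable : IntegrableOn (fun t : ℝ => t ^ (-(1 / 2) : ℝ)) (Ioc 0 1) :=
      (intervalIntegrable_iff_integrableOn_Ioc_of_le zero_le_one).1
        (intervalIntegral.intervalIntegrable_rpow' (by norm_num))
    exact hintegrable.setLIntegral_lt_top.ne
  refine ⟨T * A, ENNReal.mul_ne_top hT hA, fun F hF hFc r hr e he => ?_⟩
  set D := eLpNorm (fderiv ℝ F) 2 μ
  calc ENNReal.ofReal r * ∫⁻ w in B, arcIntegral F r e w ∂μ
      = ∫⁻ t in Ioc (0 : ℝ) 1,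
          ENNReal.ofReal t * (ENNReal.ofReal r * ∫⁻ w in B, ‖F (arc r e w t)‖ₑ ∂μ) := by
        rw [setLIntegral_arcIntegral hF.continuous,
          ← lintegral_const_mul' _ _ ENNReal.ofReal_ne_top]
        simp only [mul_left_comm]
    _ ≤ ∫⁻ t in Ioc (0 : ℝ) 1, ENNReal.ofReal (t ^ (-(1 / 2) : ℝ)) * (A * D) := by
        refine setLIntegral_mono' measurableSet_Ioc fun t ht => ?_
        have htime : t ^ (-(1 / 2) : ℝ) = t * t ^ (-(3 / 2) : ℝ) := by
          rw [← Real.rpow_one_add' ht.1.le (by norm_num)]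
          norm_num
        rw [htime, ENNReal.ofReal_mul ht.1.le, mul_assoc]
        exact mul_le_mul_right (mul_setLIntegral_ball_enorm_arc_le μ hdim hF hFc hr he ht) _
    _ = T * A * D := by
        rw [lintegral_mul_const _ (by fun_prop), mul_assoc]

end ArcAverage

section RotationFields

lemma fderiv_apply_eq_sum_sd {d : ℕ} (F : Eu d → ℝ) (y v : Eu d) :
    fderiv ℝ F y v = ∑ i, v i * sd i F y := by
  conv_lhs => rw [← (EuclideanSpace.basisFun (Fin d) ℝ).sum_repr v]
  simp [sd]

lemma norm_fderiv_le_spGradMag (F : Eu 4 → ℝ) (y : Eu 4) : ‖fderiv ℝ F y‖ ≤ spGradMag F y := by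
  refine ContinuousLinearMap.opNorm_le_bound _ (Real.sqrt_nonneg _) fun v => ?_
  rw [mul_comm, fderiv_apply_eq_sum_sd, EuclideanSpace.norm_eq, spGradMag,
    ← Real.sqrt_mul (by positivity), Real.norm_eq_abs]
  refine Real.abs_le_sqrt ?_
  simpa using Finset.sum_mul_sq_le_sq_mul_sq Finset.univ (fun i => v i) (fun i => sd i F y)

lemma contDiff_sd {d n : ℕ} {F : Eu d → ℝ} (hF : ContDiff ℝ (n + 1) F) (i : Fin d) :
    ContDiff ℝ n (sd i F) :=
  (hF.fderiv_right le_rfl).clm_apply contDiff_const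

lemma contDiff_rot {n : ℕ} {F : Eu 4 → ℝ} (hF : ContDiff ℝ (n + 1) F) (j k : Fin 4) :
    ContDiff ℝ n (rot j k F) := by
  have hj := contDiff_sd hF j
  have hk := contDiff_sd hF k
  unfold rot
  fun_prop

lemma hasCompactSupport_rot {F : Eu 4 → ℝ} (hF : HasCompactSupport F) (j k : Fin 4) :
    HasCompactSupport (rot j k F) :=
  (hF.fderiv_apply ℝ _).mul_left.sub (hF.fderiv_apply ℝ _).mul_left

lemma contDiff_rotIter {n m : ℕ} {h : Eu 4 → ℝ} (hh : ContDiff ℝ (n + m : ℕ) h)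
    (μ : Fin m → OP) : ContDiff ℝ n (rotIter μ h) := by
  induction m generalizing n with
  | zero => exact hh
  | succ m ih =>
    rw [← add_assoc, add_right_comm] at hh
    exact contDiff_rot (ih hh _) _ _

lemma hasCompactSupport_rotIter {h : Eu 4 → ℝ} (hh : HasCompactSupport h) {m : ℕ}
    (μ : Fin m → OP) : HasCompactSupport (rotIter μ h) := by
  induction m with
  | zero => exact hh
  | succ m ih => exact hasCompactSupport_rot (ih _) _ _

/-- The coefficients of the infinitesimal rotation `y ↦ ⟪e, y⟫ w - ⟪w, y⟫ e` with respect to the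
fields `Ω_{jk}`, i.e. the Plücker coordinates of `e ∧ w`. -/
def rotCoef (e w : Eu 4) (p : OP) : ℝ := e p.1.1 * w p.1.2 - e p.1.2 * w p.1.1

lemma abs_rotCoef_le (e w : Eu 4) (p : OP) : |rotCoef e w p| ≤ 2 * (‖e‖ * ‖w‖) := by
  have hcoord (i j : Fin 4) : |e i * w j| ≤ ‖e‖ * ‖w‖ := by
    rw [abs_mul]
    exact mul_le_mul (PiLp.norm_apply_le e i) (PiLp.norm_apply_le w j) (abs_nonneg _)
      (norm_nonneg _)
  exact (abs_sub _ _).trans (by linarith [hcoord p.1.1 p.1.2, hcoord p.1.2 p.1.1])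

lemma sum_OP {M : Type*} [AddCommMonoid M] (f : OP → M) : ∑ p, f p =
    f ⟨(0, 1), by decide⟩ + f ⟨(0, 2), by decide⟩ + f ⟨(0, 3), by decide⟩ +
    f ⟨(1, 2), by decide⟩ + f ⟨(1, 3), by decide⟩ + f ⟨(2, 3), by decide⟩ := by
  have huniv : (Finset.univ : Finset OP) = {⟨(0, 1), by decide⟩, ⟨(0, 2), by decide⟩,
      ⟨(0, 3), by decide⟩, ⟨(1, 2), by decide⟩, ⟨(1, 3), by decide⟩, ⟨(2, 3), by decide⟩} := by
    decide
  rw [huniv]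
  simp [Finset.sum_insert, add_assoc]

lemma rotDeriv_eq_sum_rot (e w : Eu 4) (F : Eu 4 → ℝ) (y : Eu 4) :
    rotDeriv e w F y = ∑ p : OP, rotCoef e w p * rot p.1.1 p.1.2 F y := by
  rw [rotDeriv, fderiv_apply_eq_sum_sd, sum_OP]
  simp only [rotCoef, rot, PiLp.inner_apply, Fin.sum_univ_four, PiLp.sub_apply, PiLp.smul_apply,
    smul_eq_mul, RCLike.inner_apply, conj_trivial]
  ring

lemma rotDeriv_sum_mul (e w : Eu 4) {ι : Type*} (s : Finset ι) (c : ι → ℝ) {F : ι → Eu 4 → ℝ}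
    (hF : ∀ i ∈ s, Differentiable ℝ (F i)) (y : Eu 4) :
    rotDeriv e w (fun x => ∑ i ∈ s, c i * F i x) y = ∑ i ∈ s, c i * rotDeriv e w (F i) y := by
  have hsum : HasFDerivAt (fun x => ∑ i ∈ s, c i * F i x) (∑ i ∈ s, c i • fderiv ℝ (F i) y) y :=
    HasFDerivAt.fun_sum fun i hi => (hF i hi y).hasFDerivAt.const_mul (c i)
  simp [rotDeriv, hsum.fderiv]

lemma iterate_rotDeriv_eq_sum_rotIter (e w : Eu 4) {m : ℕ} {h : Eu 4 → ℝ} (hh : ContDiff ℝ m h) :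
    (rotDeriv e w)^[m] h =
      fun y => ∑ μ : Fin m → OP, (∏ i, rotCoef e w (μ i)) * rotIter μ h y := by
  induction m with
  | zero => simp [rotIter]
  | succ m ih =>
    have hdiff (μ : Fin m → OP) : Differentiable ℝ (rotIter μ h) :=
      (contDiff_rotIter (n := 1) (by rwa [add_comm]) μ).differentiable one_ne_zero
    funext y
    rw [Function.iterate_succ_apply', ih (hh.of_le (by exact_mod_cast m.le_succ)),
      rotDeriv_sum_mul e w _ _ fun μ _ => hdiff μ,
      ← (Fin.consEquiv fun _ => OP).sum_comp, Fintype.sum_prod_type, Finset.sum_comm]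
    simp [rotDeriv_eq_sum_rot, Fin.prod_univ_succ, rotIter, Finset.mul_sum, mul_assoc,
      mul_left_comm]

lemma norm_iterate_rotDeriv_le {e w : Eu 4} (he : ‖e‖ = 1) (hw : ‖w‖ ≤ 1 / 2) {m : ℕ}
    {h : Eu 4 → ℝ} (hh : ContDiff ℝ m h) (y : Eu 4) :
    ‖(rotDeriv e w)^[m] h y‖ ≤ ∑ μ : Fin m → OP, ‖rotIter μ h y‖ := by
  have hcoef (p : OP) : |rotCoef e w p| ≤ 1 :=
    (abs_rotCoef_le e w p).trans (by rw [he]; linarith)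
  rw [iterate_rotDeriv_eq_sum_rotIter e w hh]
  refine (norm_sum_le _ _).trans (Finset.sum_le_sum fun μ _ => ?_)
  rw [norm_mul, norm_prod]
  exact mul_le_of_le_one_left (norm_nonneg _)
    (Finset.prod_le_one (fun _ _ => norm_nonneg _) fun i _ => hcoef (μ i))

lemma continuous_rotIter {n m : ℕ} {h : Eu 4 → ℝ} (hh : ContDiff ℝ n h) (hm : m ≤ n)
    (μ : Fin m → OP) : Continuous (rotIter μ h) :=
  (contDiff_rotIter (n := 0) (hh.of_le (by rw [zero_add]; exact_mod_cast hm)) μ).continuous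

end RotationFields

section PointwiseDecay

lemma lintegral_const_mul_sum_sum {α ι : Type*} [MeasurableSpace α] {κ : ι → Type*}
    [∀ i, Fintype (κ i)] (ν : Measure α) (s : Finset ι) {f : ∀ i, κ i → α → ℝ≥0∞}
    (hf : ∀ i ∈ s, ∀ k, Measurable (f i k)) {c : ℝ≥0∞} (hc : c ≠ ⊤) :
    ∫⁻ a, c * ∑ i ∈ s, ∑ k, f i k a ∂ν = c * ∑ i ∈ s, ∑ k, ∫⁻ a, f i k a ∂ν := by
  rw [lintegral_const_mul' _ _ hc, lintegral_finsetSum _ fun i hi =>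
    Finset.measurable_fun_sum _ fun k _ => hf i hi k]
  congr 1
  exact Finset.sum_congr rfl fun i hi => lintegral_finsetSum _ fun k _ => hf i hi k

lemma enorm_le_sum_arcIntegral_rotIter {h : Eu 4 → ℝ} (hh : ContDiff ℝ 2 h) (r : ℝ) {e w : Eu 4}
    (he : ‖e‖ = 1) (hw : ‖w‖ ≤ 1 / 2) :
    ‖h (r • e)‖ₑ ≤
      40 * ∑ m ∈ Finset.range 3, ∑ μ : Fin m → OP, arcIntegral (rotIter μ h) r e w := by
  have hmeas : ∀ m ∈ Finset.range 3, ∀ μ : Fin m → OP,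
      Measurable fun t => ENNReal.ofReal t * ‖rotIter μ h (arc r e w t)‖ₑ := fun m hm μ =>
    ENNReal.measurable_ofReal.mul (measurable_enorm_comp_arc
      (continuous_rotIter (n := 2) hh (Finset.mem_range_succ_iff.1 hm) μ) r e).of_uncurry_right
  have hpointwise (t : ℝ) (ht : t ∈ Ioc (0 : ℝ) 1) :
      ENNReal.ofReal (t * (40 * ∑ m ∈ Finset.range 3, ‖(rotDeriv e w)^[m] h (arc r e w t)‖)) ≤
        40 * ∑ m ∈ Finset.range 3, ∑ μ : Fin m → OP,
          ENNReal.ofReal t * ‖rotIter μ h (arc r e w t)‖ₑ := by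
    have hiterate : ∀ m ∈ Finset.range 3, ‖(rotDeriv e w)^[m] h (arc r e w t)‖ ≤
        ∑ μ : Fin m → OP, ‖rotIter μ h (arc r e w t)‖ := fun m hm =>
      norm_iterate_rotDeriv_le he hw
        (hh.of_le (by exact_mod_cast Finset.mem_range_succ_iff.1 hm)) _
    refine (ENNReal.ofReal_le_ofReal (mul_le_mul_of_nonneg_left
      (mul_le_mul_of_nonneg_left (Finset.sum_le_sum hiterate) (by norm_num)) ht.1.le)).trans_eq ?_
    rw [mul_left_comm, ENNReal.ofReal_mul (by norm_num), ENNReal.ofReal_mul ht.1.le,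
      ENNReal.ofReal_ofNat, ENNReal.ofReal_sum_of_nonneg fun _ _ => by positivity]
    simp only [ENNReal.ofReal_sum_of_nonneg fun _ _ => norm_nonneg _, ofReal_norm, Finset.mul_sum]
  exact (enorm_le_lintegral_arc hh r he hw).trans
    ((setLIntegral_mono' measurableSet_Ioc hpointwise).trans_eq
      (lintegral_const_mul_sum_sum _ _ hmeas (by norm_num)))

lemma volume_ball_mul_enorm_le_sum_lintegral_arcIntegral {h : Eu 4 → ℝ} (hh : ContDiff ℝ 2 h)
    (r : ℝ) {e : Eu 4} (he : ‖e‖ = 1) :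
    volume (Metric.ball (0 : Eu 4) (1 / 2)) * ‖h (r • e)‖ₑ ≤
      40 * ∑ m ∈ Finset.range 3, ∑ μ : Fin m → OP,
        ∫⁻ w in Metric.ball 0 (1 / 2), arcIntegral (rotIter μ h) r e w := by
  have hmeas : ∀ m ∈ Finset.range 3, ∀ μ : Fin m → OP,
      Measurable (arcIntegral (rotIter μ h) r e) := fun m hm μ =>
    measurable_arcIntegral
      (continuous_rotIter (n := 2) hh (Finset.mem_range_succ_iff.1 hm) μ) r e
  calc volume (Metric.ball (0 : Eu 4) (1 / 2)) * ‖h (r • e)‖ₑ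
      = ∫⁻ _ in Metric.ball (0 : Eu 4) (1 / 2), ‖h (r • e)‖ₑ := by
        rw [setLIntegral_const, mul_comm]
    _ ≤ ∫⁻ w in Metric.ball (0 : Eu 4) (1 / 2),
          40 * ∑ m ∈ Finset.range 3, ∑ μ : Fin m → OP, arcIntegral (rotIter μ h) r e w :=
        setLIntegral_mono' measurableSet_ball fun w hw =>
          enorm_le_sum_arcIntegral_rotIter hh r he (mem_ball_zero_iff.1 hw).le
    _ = _ := lintegral_const_mul_sum_sum _ _ hmeas (by norm_num)

lemma exists_enorm_mul_enorm_le_sum_eLpNorm_spGradMag :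
    ∃ K : ℝ≥0∞, K ≠ ⊤ ∧ ∀ h : Eu 4 → ℝ, ContDiff ℝ 3 h → HasCompactSupport h → ∀ x : Eu 4,
      ‖x‖ₑ * ‖h x‖ₑ ≤ K * ∑ m ∈ Finset.range 3, ∑ μ : Fin m → OP,
        eLpNorm (spGradMag (rotIter μ h)) 2 (volume : Measure (Eu 4)) := by
  obtain ⟨K, hK, haverage⟩ := exists_setLIntegral_ball_arcIntegral_le_eLpNorm_fderiv (V := ℝ)
    (volume : Measure (Eu 4)) finrank_euclideanSpace_fin
  set V := volume (Metric.ball (0 : Eu 4) (1 / 2))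
  have hV : V ≠ 0 := (Metric.measure_ball_pos volume _ one_half_pos).ne'
  have hVtop : V ≠ ⊤ := measure_ball_lt_top.ne
  refine ⟨V⁻¹ * (40 * K), ENNReal.mul_ne_top (ENNReal.inv_ne_top.2 hV)
    (ENNReal.mul_ne_top (by norm_num) hK), fun h hh hhc x => ?_⟩
  rcases eq_or_ne x 0 with rfl | hx
  · simp only [enorm_zero, zero_mul, zero_le]
  have hterm : ∀ m ∈ Finset.range 3, ∀ μ : Fin m → OP, ENNReal.ofReal ‖x‖ *
      ∫⁻ w in Metric.ball 0 (1 / 2), arcIntegral (rotIter μ h) ‖x‖ (‖x‖⁻¹ • x) w ≤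
        K * eLpNorm (spGradMag (rotIter μ h)) 2 volume := fun m hm μ => by
    have hm : 1 + m ≤ 3 := by linarith [Finset.mem_range_succ_iff.1 hm]
    have hμ : ContDiff ℝ 1 (rotIter μ h) :=
      contDiff_rotIter (n := 1) (hh.of_le (by exact_mod_cast hm)) μ
    exact (haverage _ hμ (hasCompactSupport_rotIter hhc μ) _ (norm_pos_iff.2 hx) _
      (norm_smul_inv_norm hx)).trans
        (mul_le_mul_right (eLpNorm_mono_real fun y => norm_fderiv_le_spGradMag _ y) K)
  have hball := volume_ball_mul_enorm_le_sum_lintegral_arcIntegral (h := h)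
    (hh.of_le (by norm_num)) ‖x‖ (norm_smul_inv_norm (𝕜 := ℝ) hx)
  rw [RCLike.ofReal_real_eq_id, id, smul_inv_smul₀ (norm_ne_zero_iff.2 hx)] at hball
  rw [mul_assoc, ← ENNReal.mul_le_iff_le_inv hV hVtop]
  calc V * (‖x‖ₑ * ‖h x‖ₑ)
      = ENNReal.ofReal ‖x‖ * (V * ‖h x‖ₑ) := by rw [mul_left_comm, ofReal_norm]
    _ ≤ ENNReal.ofReal ‖x‖ * (40 * _) := mul_le_mul_right hball _
    _ = 40 * ∑ m ∈ Finset.range 3, ∑ μ : Fin m → OP, ENNReal.ofReal ‖x‖ *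
          ∫⁻ w in Metric.ball 0 (1 / 2), arcIntegral (rotIter μ h) ‖x‖ (‖x‖⁻¹ • x) w := by
        simp only [mul_left_comm (ENNReal.ofReal ‖x‖) 40, Finset.mul_sum]
    _ ≤ 40 * ∑ m ∈ Finset.range 3, ∑ μ : Fin m → OP,
          K * eLpNorm (spGradMag (rotIter μ h)) 2 volume :=
        mul_le_mul_right (Finset.sum_le_sum fun m hm => Finset.sum_le_sum fun μ _ =>
          hterm m hm μ) _
    _ = _ := by simp only [Finset.mul_sum, mul_assoc]

theorem weighted_sobolev_gradient_general :
    ∃ C : ℝ, 0 < C ∧ ∀ h : Eu 4 → ℝ, ContDiff ℝ 3 h → HasCompactSupport h →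
      ∀ R : ℝ, ∀ x : Eu 4, R / 2 ≤ ‖x‖ →
        ENNReal.ofReal (R * |h x|)
          ≤ ENNReal.ofReal C *
            ∑ m ∈ Finset.range 3, ∑ μ : Fin m → OP,
              eLpNorm (spGradMag (rotIter μ h)) 2 (volume : Measure (Eu 4)) := by
  obtain ⟨K, hK, hdecay⟩ := exists_enorm_mul_enorm_le_sum_eLpNorm_spGradMag
  refine ⟨2 * K.toReal + 1, by positivity, fun h hh hhc R x hR => ?_⟩
  have hC : 2 * K ≤ ENNReal.ofReal (2 * K.toReal + 1) := by
    rw [ENNReal.ofReal_add (by positivity) zero_le_one, ENNReal.ofReal_mul zero_le_two,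
      ENNReal.ofReal_toReal hK, ENNReal.ofReal_ofNat]
    exact le_self_add
  calc ENNReal.ofReal (R * |h x|)
      ≤ ENNReal.ofReal (2 * (‖x‖ * |h x|)) := by
        refine ENNReal.ofReal_le_ofReal ?_
        rw [← mul_assoc]
        gcongr
        linarith
    _ = 2 * (‖x‖ₑ * ‖h x‖ₑ) := by
        rw [ENNReal.ofReal_mul zero_le_two, ENNReal.ofReal_mul (norm_nonneg x), ofReal_norm,
          Real.enorm_eq_ofReal_abs, ENNReal.ofReal_ofNat]
    _ ≤ 2 * (K * _) := mul_le_mul_right (hdecay h hh hhc x) 2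
    _ ≤ _ := (mul_assoc _ _ _).symm.trans_le (mul_le_mul_left hC _)

end PointwiseDecay

/-- Weighted Sobolev estimate with full gradient on ℝ⁴. -/
theorem weighted_sobolev_gradient :
    ∃ C : ℝ, 0 < C ∧ ∀ h : Eu 4 → ℝ, ContDiff ℝ (⊤ : ℕ∞) h → HasCompactSupport h →
      ∀ R : ℝ, 0 < R → ∀ x : Eu 4, R/2 < ‖x‖ → ‖x‖ < R →
        ENNReal.ofReal (R * |h x|)
          ≤ ENNReal.ofReal C *
            ∑ m ∈ Finset.range 3, ∑ μ : Fin m → OP,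
              eLpNorm (spGradMag (rotIter μ h)) 2 (volume : Measure (Eu 4)) := by
  obtain ⟨C, hC, hestimate⟩ := weighted_sobolev_gradient_general
  exact ⟨C, hC, fun h hh hhc R _ x hx _ => hestimate h (contDiff_infty.1 hh 3) hhc R x hx.le⟩
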